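/- Let σ : Δ_d → ℝ^N be continuous, differentiable at every interior point of Δ_d, and of finite volume, and let ℓ : ℝ^d → ℝ^d be an injective affine map with ℓ(Δ_d) ⊆ Δ_d. Then σ ∘ ℓ : Δ_d → ℝ^N is continuous, differentiable at every interior point of Δ_d, and has finite volume. -/

import Mathlib

open MeasureTheory Set

noncomputable section

/-- The standard `d`-simplex `Δ_d ⊆ ℝ^d`. -/
def simplexSet (d : ℕ) : Set (Fin d → ℝ) :=
  {b | (∀ i, 0 ≤ b i) ∧ ∑ i, b i ≤ 1}

/-- The `i`-th face map `δ_i : Δ_d → Δ_{d+1}` (as a map of ambient spaces):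
`δ_0 b = (1 - ∑ b, b)` and, for `i ≥ 1`, `δ_i` inserts a `0` at position `i - 1`. -/
def faceMap (d : ℕ) (i : Fin (d + 2)) (b : Fin d → ℝ) : Fin (d + 1) → ℝ :=
  if h : i = 0 then Fin.cons (1 - ∑ j, b j) b
  else Fin.insertNth (i.pred h) 0 b

/-- Continuous `d`-multilinear forms on `ℝ^N` (on finite-dimensional spaces every
multilinear form is automatically continuous). -/
abbrev Form (N d : ℕ) : Type :=
  ContinuousMultilinearMap ℝ (fun _ : Fin d => (Fin N → ℝ)) ℝ

/-- A multilinear form is alternating if it vanishes whenever two arguments agree. -/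
def IsAlternatingForm {N d : ℕ} (A : Form N d) : Prop :=
  ∀ v : Fin d → (Fin N → ℝ), ∀ i j, v i = v j → i ≠ j → A v = 0

/-- The pullback density `ω(σ(x))(Dσ(x)e_1, …, Dσ(x)e_d)` of a `d`-form `ω` along `σ`
at `x`, where `e_1, …, e_d` is the standard basis of `ℝ^d`. -/
def pullbackDensity {d N : ℕ} (σ : (Fin d → ℝ) → (Fin N → ℝ))
    (ω : (Fin N → ℝ) → Form N d) (x : Fin d → ℝ) : ℝ :=
  ω (σ x) fun j => fderiv ℝ σ x (Pi.single j 1)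

/-- A simplex `σ : Δ_d → ℝ^N` has finite volume if for every family of alternating
`d`-forms, continuous on `σ(Δ_d)`, the pullback density along `σ` is Lebesgue
integrable on the interior of `Δ_d`. -/
def FiniteVolume {d N : ℕ} (σ : (Fin d → ℝ) → (Fin N → ℝ)) : Prop :=
  ∀ ω : (Fin N → ℝ) → Form N d,
    (∀ y ∈ σ '' simplexSet d, IsAlternatingForm (ω y)) →
    ContinuousOn ω (σ '' simplexSet d) →
    IntegrableOn (pullbackDensity σ ω) (interior (simplexSet d))

/-- The pullback density of the exterior derivative `dω` of a `d`-form `ω` along a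
`(d+1)`-simplex `σ` at `x`:
`dω(y)(v_0, …, v_d) = ∑ i, (-1)^i (Dω(y)v_i)(v_0, …, v̂_i, …, v_d)` with `v_i = Dσ(x)e_i`. -/
def pullbackDensityD {d N : ℕ} (σ : (Fin (d + 1) → ℝ) → (Fin N → ℝ))
    (ω : (Fin N → ℝ) → Form N d) (x : Fin (d + 1) → ℝ) : ℝ :=
  ∑ i : Fin (d + 1), (-1 : ℝ) ^ (i : ℕ) *
    fderiv ℝ ω (σ x) (fderiv ℝ σ x (Pi.single i 1))
      (fun j => fderiv ℝ σ x (Pi.single (i.succAbove j) 1))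

/-- A `(d+1)`-simplex `σ` (C¹ on all open faces) satisfies Stokes if it and all of its
faces have finite volume, and Stokes' formula
`∫_{Δ_{d+1}} σ^*(dω) = ∑ i (-1)^i ∫_{Δ_d} (σ ∘ δ_i)^*(ω)` holds for every C¹ family of
alternating `d`-forms `ω` on an open neighbourhood of `σ(Δ_{d+1})`. -/
def SatisfiesStokes {d N : ℕ} (σ : (Fin (d + 1) → ℝ) → (Fin N → ℝ)) : Prop :=
  FiniteVolume σ ∧ (∀ i : Fin (d + 2), FiniteVolume (σ ∘ faceMap d i)) ∧
  ∀ (V : Set (Fin N → ℝ)) (ω : (Fin N → ℝ) → Form N d),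
    IsOpen V → σ '' simplexSet (d + 1) ⊆ V →
    (∀ y ∈ V, IsAlternatingForm (ω y)) → ContDiffOn ℝ 1 ω V →
    ∫ x in interior (simplexSet (d + 1)), pullbackDensityD σ ω x =
      ∑ i : Fin (d + 2), (-1 : ℝ) ^ (i : ℕ) *
        ∫ b in interior (simplexSet d), pullbackDensity (σ ∘ faceMap d i) ω b

/-- `σ : Δ_d → ℝ^N` is C¹ on all open faces: it is continuous on `Δ_d`, C¹ on the
interior of `Δ_d`, and all iterated face composites `σ ∘ δ_{i_1} ∘ ⋯ ∘ δ_{i_k}` have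
the same property. -/
def C1OnOpenFaces (N : ℕ) : ∀ d, ((Fin d → ℝ) → (Fin N → ℝ)) → Prop
  | 0, σ => ContinuousOn σ (simplexSet 0) ∧ ContDiffOn ℝ 1 σ (interior (simplexSet 0))
  | d + 1, σ => ContinuousOn σ (simplexSet (d + 1)) ∧
      ContDiffOn ℝ 1 σ (interior (simplexSet (d + 1))) ∧
      ∀ i : Fin (d + 2), C1OnOpenFaces N d (σ ∘ faceMap d i)

/-- `σ` and all of its iterated face composites have finite volume. -/
def FiniteVolumeFaces (N : ℕ) : ∀ d, ((Fin d → ℝ) → (Fin N → ℝ)) → Prop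
  | 0, σ => FiniteVolume σ
  | d + 1, σ => FiniteVolume σ ∧ ∀ i : Fin (d + 2), FiniteVolumeFaces N d (σ ∘ faceMap d i)

/-- `σ` and all of its iterated face composites satisfy Stokes
(a `0`-simplex satisfies Stokes by convention). -/
def SatisfiesStokesFaces (N : ℕ) : ∀ d, ((Fin d → ℝ) → (Fin N → ℝ)) → Prop
  | 0, _ => True
  | d + 1, σ => SatisfiesStokes σ ∧ ∀ i : Fin (d + 2), SatisfiesStokesFaces N d (σ ∘ faceMap d i)

/-- The cone `σ̂ : Δ_{d+1} → ℝ^N` over a simplex `σ : Δ_d → ℝ^N`: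
`σ̂(a_0, …, a_d) = A ⬝ σ(a_1/A, …, a_d/A)` with `A = ∑ a_i` if `A ≠ 0`, and `0` else. -/
def cone {d N : ℕ} (σ : (Fin d → ℝ) → (Fin N → ℝ)) (a : Fin (d + 1) → ℝ) : Fin N → ℝ :=
  if (∑ i, a i) = 0 then 0 else (∑ i, a i) • σ fun j => a j.succ / ∑ i, a i

/-- The map `q(t, b) = ((1-t)(1-∑ b), (1-t)b_1, …, (1-t)b_d)` from `[0,1] × Δ_d`
onto `Δ_{d+1}`. -/
def qMap (d : ℕ) (p : ℝ × (Fin d → ℝ)) : Fin (d + 1) → ℝ :=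
  Fin.cons ((1 - p.1) * (1 - ∑ j, p.2 j)) fun j => (1 - p.1) * p.2 j

/-- The inverse `i(a_0, …, a_d) = (1 - A, a_1/A, …, a_d/A)`, `A = ∑ a_i`, of `q`. -/
def iMap (d : ℕ) (a : Fin (d + 1) → ℝ) : ℝ × (Fin d → ℝ) :=
  (1 - ∑ i, a i, fun j => a j.succ / ∑ i, a i)

/-- The subspace of alternating forms. -/
def altSub (N d : ℕ) : Submodule ℝ (Form N d) where
  carrier := {A | IsAlternatingForm A}
  zero_mem' := by
    intro v i j _ _
    rfl
  add_mem' := by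
    intro a b ha hb v i j h hij
    have h1 := ha v i j h hij
    have h2 := hb v i j h hij
    simp [h1, h2]
  smul_mem' := by
    intro c a ha v i j h hij
    have h1 := ha v i j h hij
    simp [h1]

lemma finDim_form (N d : ℕ) : FiniteDimensional ℝ (Form N d) :=
  FiniteDimensional.of_injective
    (ContinuousMultilinearMap.toMultilinearMapLinear (R' := ℝ) (A := ℝ)
      (M₁ := fun _ : Fin d => (Fin N → ℝ)) (M₂ := ℝ))
    ContinuousMultilinearMap.toMultilinearMap_injective

lemma exists_extension {N d : ℕ} (K : Set (Fin N → ℝ)) (hK : IsClosed K)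
    (ω : (Fin N → ℝ) → Form N d) (ha : ∀ y ∈ K, IsAlternatingForm (ω y))
    (hω : ContinuousOn ω K) :
    ∃ η : (Fin N → ℝ) → Form N d, Continuous η ∧ (∀ y, IsAlternatingForm (η y)) ∧
      ∀ y ∈ K, η y = ω y := by
  have := finDim_form N d
  have : TietzeExtension.{0, 0} (altSub N d) := TietzeExtension.of_tvs ℝ
  let f : C(K, altSub N d) :=
    ⟨fun y => ⟨ω y, ha y y.2⟩, (continuousOn_iff_continuous_domRestrict.1 hω).subtype_mk _⟩
  obtain ⟨g, hg⟩ := f.exists_restrict_eq hK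
  refine ⟨fun y => (g y : Form N d), continuous_subtype_val.comp g.continuous,
    fun y => (g y).2, fun y hy => ?_⟩
  have := congrArg (fun h : C(K, altSub N d) => ((h ⟨y, hy⟩ : altSub N d) : Form N d)) hg
  exact this

lemma alt_det {N d : ℕ} (A : Form N d) (hA : IsAlternatingForm A)
    (T : (Fin d → ℝ) →L[ℝ] (Fin N → ℝ)) (L : (Fin d → ℝ) →ₗ[ℝ] (Fin d → ℝ)) :
    A (fun j => T (L (Pi.single j 1))) = LinearMap.det L * A (fun j => T (Pi.single j 1)) := by
  let B : (Fin d → ℝ) [⋀^Fin d]→ₗ[ℝ] ℝ :=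
    { A.toMultilinearMap.compLinearMap (fun _ => (T : (Fin d → ℝ) →ₗ[ℝ] (Fin N → ℝ))) with
      map_eq_zero_of_eq' := by
        intro v i j h hij
        exact hA _ i j (by simp [h]) hij }
  have hB : ∀ v, B v = A (fun j => T (v j)) := fun v => rfl
  rw [← hB (fun j => L (Pi.single j 1)), ← hB (fun j => Pi.single j 1)]
  have h := B.eq_smul_basis_det (Pi.basisFun ℝ (Fin d))
  have e : (fun j => L (Pi.single j 1)) = L ∘ (Pi.basisFun ℝ (Fin d)) := by
    ext; simp
  have e' : (fun j => (Pi.single j 1 : Fin d → ℝ)) = Pi.basisFun ℝ (Fin d) := by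
    ext; simp
  have h2 := congrArg (fun C => C (L ∘ (Pi.basisFun ℝ (Fin d)))) h
  simp only [AlternatingMap.smul_apply, Module.Basis.det_comp, Module.Basis.det_self,
    smul_eq_mul, mul_one] at h2
  rw [e, e', h2, mul_comm]

lemma isCompact_simplexSet (d : ℕ) : IsCompact (simplexSet d) := by
  refine (isCompact_Icc (a := (0 : Fin d → ℝ)) (b := 1)).of_isClosed_subset ?_ ?_
  · have : simplexSet d = (⋂ i, {b | 0 ≤ b i}) ∩ {b | ∑ i, b i ≤ 1} := by
      ext b; simp [simplexSet]
    rw [this]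
    refine (isClosed_iInter fun i => isClosed_le (by fun_prop) (by fun_prop)).inter
      (isClosed_le (by fun_prop) (by fun_prop))
  · rintro b ⟨h0, h1⟩
    refine ⟨h0, fun i => ?_⟩
    exact (Finset.single_le_sum (fun j _ => h0 j) (Finset.mem_univ i)).trans h1

/-- Stability of finite volume under injective affine reparametrisations `ℓ` of `Δ_d`
(applied to barycentric subdivision in the proof of Theorem 4.5): if `σ : Δ_d → ℝ^N` is
continuous, differentiable on the interior, and of finite volume, then so is `σ ∘ ℓ`. -/
theorem finiteVolume_comp_affine {d N : ℕ} (σ : (Fin d → ℝ) → (Fin N → ℝ))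
    (ℓ : (Fin d → ℝ) →ᵃ[ℝ] (Fin d → ℝ)) (hinj : Function.Injective ℓ)
    (hmaps : ℓ '' simplexSet d ⊆ simplexSet d)
    (hc : ContinuousOn σ (simplexSet d))
    (hd : DifferentiableOn ℝ σ (interior (simplexSet d)))
    (hv : FiniteVolume σ) :
    ContinuousOn (σ ∘ ℓ) (simplexSet d) ∧
    DifferentiableOn ℝ (σ ∘ ℓ) (interior (simplexSet d)) ∧
    FiniteVolume (σ ∘ ⇑ℓ) := by
  have hℓc : Continuous ℓ := ℓ.continuous_of_finiteDimensional
  have hmt : MapsTo ℓ (simplexSet d) (simplexSet d) := mapsTo_iff_image_subset.2 hmaps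
  have hLinj : Function.Injective ℓ.linear := (AffineMap.linear_injective_iff ℓ).2 hinj
  have hLsurj : Function.Surjective ℓ.linear := LinearMap.injective_iff_surjective.1 hLinj
  have hopen : IsOpenMap ℓ :=
    AffineMap.isOpenMap_linear_iff.1 (ℓ.linear.isOpenMap_of_finiteDimensional hLsurj)
  have hint : MapsTo ℓ (interior (simplexSet d)) (interior (simplexSet d)) := by
    rw [mapsTo_iff_image_subset]
    exact (hopen.image_interior_subset _).trans (interior_mono hmaps)
  let L : (Fin d → ℝ) →L[ℝ] (Fin d → ℝ) := LinearMap.toContinuousLinearMap ℓ.linear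
  have hder : ∀ x, HasFDerivAt ℓ L x := by
    intro x
    have h1 : (ℓ : (Fin d → ℝ) → (Fin d → ℝ)) = fun z => L z + ℓ 0 := by
      rw [AffineMap.decomp ℓ]
      ext; simp [L]
    rw [h1]
    exact L.hasFDerivAt.add_const _
  have hcc : ContinuousOn (σ ∘ ℓ) (simplexSet d) := hc.comp hℓc.continuousOn hmt
  refine ⟨hcc, hd.comp (fun x _ => (hder x).differentiableAt.differentiableWithinAt) hint, ?_⟩
  intro ω ha hω
  obtain ⟨η, hηc, hηa, hηe⟩ := exists_extension _
    ((isCompact_simplexSet d).image_of_continuousOn hcc).isClosed ω ha hω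
  have hI := (hv η (fun y _ => hηa y) hηc.continuousOn).mono_set
    (mapsTo_iff_image_subset.1 hint)
  rw [integrableOn_image_iff_integrableOn_abs_det_fderiv_smul volume
    isOpen_interior.measurableSet (fun x _ => (hder x).hasFDerivWithinAt) hinj.injOn] at hI
  have hdet : LinearMap.det ℓ.linear ≠ 0 := by
    have := (LinearEquiv.ofBijective ℓ.linear ⟨hLinj, hLsurj⟩).isUnit_det'
    exact this.ne_zero
  have hdetL : L.det = LinearMap.det ℓ.linear := rfl
  have hI2 := hI.const_mul (LinearMap.det ℓ.linear / |LinearMap.det ℓ.linear|)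
  refine IntegrableOn.congr_fun hI2 (fun x hx => ?_) isOpen_interior.measurableSet
  have hσ : HasFDerivAt σ (fderiv ℝ σ (ℓ x)) (ℓ x) :=
    (hd.differentiableAt (isOpen_interior.mem_nhds (hint hx))).hasFDerivAt
  have hcomp : fderiv ℝ (σ ∘ ℓ) x = (fderiv ℝ σ (ℓ x)).comp L := (hσ.comp x (hder x)).fderiv
  have key := alt_det (η (σ (ℓ x))) (hηa _) (fderiv ℝ σ (ℓ x)) ℓ.linear
  have hω' : η (σ (ℓ x)) = ω ((σ ∘ ℓ) x) := hηe _ ⟨x, interior_subset hx, rfl⟩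
  have hR : pullbackDensity (σ ∘ ℓ) ω x =
      LinearMap.det ℓ.linear * pullbackDensity σ η (ℓ x) := by
    unfold pullbackDensity
    rw [hcomp, ← key, ← hω']
    rfl
  have habs : |LinearMap.det ℓ.linear| ≠ 0 := abs_ne_zero.2 hdet
  simp only [hR, hdetL, smul_eq_mul]
  field_simp

end
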